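/- Fix disjoint sets Y (agent atoms) and X (environment atoms). For all LTLf formulas φ_org and φ_new over atoms Y ∪ X, every history h, and every agent strategy σ: σ solves incremental synthesis for (φ_org, h, φ_new) if and only if σ is winning for the LTLf formula prog(φ_org, h) ∧ φ_new. -/

import Mathlib

inductive LTLf (P : Type) : Type where
  | tt : LTLf P
  | ff : LTLf P
  | atom : P → LTLf P
  | natom : P → LTLf P
  | conj : LTLf P → LTLf P → LTLf P
  | disj : LTLf P → LTLf P → LTLf P
  | next : LTLf P → LTLf P
  | wnext : LTLf P → LTLf P
  | untl : LTLf P → LTLf P → LTLf P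
  | release : LTLf P → LTLf P → LTLf P
  deriving DecidableEq

def LTLf.Sat {P : Type} : List (Set P) → LTLf P → Prop
  | _, .tt => True
  | _, .ff => False
  | [], .atom _ => False
  | w :: _, .atom p => p ∈ w
  | [], .natom _ => False
  | w :: _, .natom p => p ∉ w
  | τ, .conj φ₁ φ₂ => LTLf.Sat τ φ₁ ∧ LTLf.Sat τ φ₂
  | τ, .disj φ₁ φ₂ => LTLf.Sat τ φ₁ ∨ LTLf.Sat τ φ₂
  | [], .next _ => False
  | _ :: τ, .next φ => τ ≠ [] ∧ LTLf.Sat τ φ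
  | [], .wnext _ => True
  | _ :: τ, .wnext φ => τ = [] ∨ LTLf.Sat τ φ
  | [], .untl _ _ => False
  | w :: τ, .untl φ₁ φ₂ =>
      LTLf.Sat (w :: τ) φ₂ ∨ (LTLf.Sat (w :: τ) φ₁ ∧ LTLf.Sat τ (.untl φ₁ φ₂))
  | [], .release _ _ => True
  | w :: τ, .release φ₁ φ₂ =>
      LTLf.Sat (w :: τ) φ₂ ∧ (LTLf.Sat (w :: τ) φ₁ ∨ LTLf.Sat τ (.release φ₁ φ₂))
termination_by τ φ => (τ.length, sizeOf φ)

open Classical in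
noncomputable def LTLf.prog {P : Type} : LTLf P → Set P → LTLf P
  | .tt, _ => .tt
  | .ff, _ => .ff
  | .atom p, w => if p ∈ w then .tt else .ff
  | .natom p, w => if p ∈ w then .ff else .tt
  | .conj φ₁ φ₂, w => .conj (φ₁.prog w) (φ₂.prog w)
  | .disj φ₁ φ₂, w => .disj (φ₁.prog w) (φ₂.prog w)
  | .next φ, _ => .conj φ (.untl .tt .tt)
  | .wnext φ, _ => .disj φ (.release .ff .ff)
  | .untl φ₁ φ₂, w =>
      .disj (φ₂.prog w) (.conj (φ₁.prog w) (.conj (.untl φ₁ φ₂) (.untl .tt .tt)))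
  | .release φ₁ φ₂, w =>
      .conj (φ₂.prog w) (.disj (φ₁.prog w) (.disj (.release φ₁ φ₂) (.release .ff .ff)))

noncomputable def LTLf.progTrace {P : Type} (φ : LTLf P) (h : List (Set P)) : LTLf P :=
  h.foldl LTLf.prog φ

/-- The joint interpretation over atoms `Y ⊕ X` determined by an agent move `m.1 ⊆ Y`
and an environment move `m.2 ⊆ X`. -/
def joint {Y X : Type} (m : Set Y × Set X) : Set (Y ⊕ X) :=
  {a | Sum.elim (· ∈ m.1) (· ∈ m.2) a}

/-- The finite trace (over `2^(Y∪X)`) formed by the first `k` joint moves of a play. -/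
def jointTrace {Y X : Type} (π : ℕ → Set Y × Set X) (k : ℕ) : List (Set (Y ⊕ X)) :=
  (List.range k).map fun i => joint (π i)

/-- The finite trace corresponding to a history (finite sequence of joint moves). -/
def histTrace {Y X : Type} (h : List (Set Y × Set X)) : List (Set (Y ⊕ X)) :=
  h.map joint

/-- A play is σ-consistent if at every instant the agent move is the one prescribed by
the strategy σ on the preceding environment moves (in particular `Y_0 = σ(ε)`). -/
def PlayConsistent {Y X : Type} (σ : List (Set X) → Set Y) (π : ℕ → Set Y × Set X) : Prop :=
  ∀ i : ℕ, (π i).1 = σ ((List.range i).map fun j => (π j).2)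

/-- A history is σ-consistent if every agent move in it is prescribed by σ on the
preceding environment moves. -/
def HistConsistent {Y X : Type} (σ : List (Set X) → Set Y) (h : List (Set Y × Set X)) : Prop :=
  ∀ (i : ℕ) (hi : i < h.length), (h.get ⟨i, hi⟩).1 = σ ((h.take i).map Prod.snd)
/-- A strategy σ is winning for the LTLf formula φ over atoms Y ∪ X if every
σ-consistent play has a finite, possibly empty, prefix satisfying φ. -/
def WinningFor {Y X : Type} (σ : List (Set X) → Set Y) (φ : LTLf (Y ⊕ X)) : Prop :=
  ∀ π : ℕ → Set Y × Set X, PlayConsistent σ π → ∃ k : ℕ, LTLf.Sat (jointTrace π k) φ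

/-- A strategy σ is winning for φ assuming the history h if for every σ-consistent play τ
the concatenation h·τ has a finite, possibly empty, prefix (extending h) satisfying φ. -/
def WinningAssuming {Y X : Type} (σ : List (Set X) → Set Y) (φ : LTLf (Y ⊕ X))
    (h : List (Set Y × Set X)) : Prop :=
  ∀ π : ℕ → Set Y × Set X, PlayConsistent σ π →
    ∃ k : ℕ, LTLf.Sat (histTrace h ++ jointTrace π k) φ

/-- A strategy σ solves incremental synthesis for (φ_org, h, φ_new) if every σ-consistent
play has a finite, possibly empty, prefix ρ such that h·ρ satisfies φ_org and ρ
satisfies φ_new. -/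
def SolvesIncremental {Y X : Type} (σ : List (Set X) → Set Y) (φorg : LTLf (Y ⊕ X))
    (h : List (Set Y × Set X)) (φnew : LTLf (Y ⊕ X)) : Prop :=
  ∀ π : ℕ → Set Y × Set X, PlayConsistent σ π →
    ∃ k : ℕ, LTLf.Sat (histTrace h ++ jointTrace π k) φorg ∧ LTLf.Sat (jointTrace π k) φnew
theorem LTLf.sat_untl_tt_tt {P : Type} (τ : List (Set P)) :
    LTLf.Sat τ (.untl .tt .tt) ↔ τ ≠ [] := by
  cases τ <;> simp [LTLf.Sat]

theorem LTLf.sat_release_ff_ff {P : Type} (τ : List (Set P)) :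
    LTLf.Sat τ (.release .ff .ff) ↔ τ = [] := by
  cases τ <;> simp [LTLf.Sat]

theorem LTLf.sat_prog {P : Type} (φ : LTLf P) (w : Set P) (τ : List (Set P)) :
    LTLf.Sat τ (φ.prog w) ↔ LTLf.Sat (w :: τ) φ := by
  induction φ with
  | tt => simp [LTLf.prog, LTLf.Sat]
  | ff => simp [LTLf.prog, LTLf.Sat]
  | atom p => by_cases hp : p ∈ w <;> simp [LTLf.prog, LTLf.Sat, hp]
  | natom p => by_cases hp : p ∈ w <;> simp [LTLf.prog, LTLf.Sat, hp]
  | conj φ₁ φ₂ ih₁ ih₂ => simp [LTLf.prog, LTLf.Sat, ih₁, ih₂]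
  | disj φ₁ φ₂ ih₁ ih₂ => simp [LTLf.prog, LTLf.Sat, ih₁, ih₂]
  | next φ _ =>
    simp only [LTLf.prog, LTLf.Sat, LTLf.sat_untl_tt_tt]
    exact and_comm
  | wnext φ _ =>
    simp only [LTLf.prog, LTLf.Sat, LTLf.sat_release_ff_ff]
    exact or_comm
  | untl φ₁ φ₂ ih₁ ih₂ =>
    cases τ <;> simp [LTLf.prog, LTLf.Sat, ih₁, ih₂]
  | release φ₁ φ₂ ih₁ ih₂ =>
    cases τ <;> simp [LTLf.prog, LTLf.Sat, ih₁, ih₂]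

theorem LTLf.sat_progTrace {P : Type} (φ : LTLf P) (h τ : List (Set P)) :
    LTLf.Sat τ (φ.progTrace h) ↔ LTLf.Sat (h ++ τ) φ := by
  induction h generalizing φ with
  | nil => rfl
  | cons w h ih => exact (ih (φ.prog w)).trans (LTLf.sat_prog φ w (h ++ τ))

/-- A strategy σ solves incremental synthesis for (φ_org, h, φ_new) iff
σ is winning for the LTLf formula prog(φ_org, h) ∧ φ_new. -/
theorem incremental_iff_winning_prog_conj {Y X : Type}
    (φorg φnew : LTLf (Y ⊕ X)) (h : List (Set Y × Set X)) (σ : List (Set X) → Set Y) :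
    SolvesIncremental σ φorg h φnew ↔
      WinningFor σ (LTLf.conj (φorg.progTrace (histTrace h)) φnew) := by
  simp only [SolvesIncremental, WinningFor, LTLf.Sat, LTLf.sat_progTrace]
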